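/- Assume additionally that Q is positive definite (σ₁ > 0 and σ₁σ₃ − σ₂² > 0). Then for every h ∈ ℤ and every positive integer k with gcd(h,k) = 1, the series Σ_{j∈{1,2}} (−1)^{j+1} Σ_{α∈𝒮_j} Σ_{n∈ℕ₀²} e^{2πi(h/k)·L·Q(n+α)} e^{−t·L·Q(n+α)} converges absolutely for every t > 0 and has a finite limit as t → 0⁺; that is, the series 𝒵_{Q,r,s}(q) := Σ_{j∈{1,2}} (−1)^{j+1} Σ_{α∈𝒮_j} Σ_{n∈ℕ₀²} q^{L·Q(n+α)} has a finite radial limit as q approaches the root of unity e^{2πih/k}. -/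

import Mathlib

open Complex Filter Topology

/-- `e(x) = e^{2πix}` for rational `x`. -/
noncomputable def eQ (x : ℚ) : ℂ := Complex.exp (2 * Real.pi * Complex.I * (x : ℂ))

/-- The two points `x/N` and `1 - x/N = (N-x)/N`. -/
noncomputable def pt (x N : ℕ) : Fin 2 → ℚ := ![(x : ℚ) / N, 1 - (x : ℚ) / N]

noncomputable def gfun (u : ℝ) : ℝ := if u = 0 then 1 / 2 else (Real.exp u - 1 - u) / u ^ 2

lemma gfun_spec (u : ℝ) : Real.exp u = 1 + u + u ^ 2 * gfun u := by
  unfold gfun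
  split_ifs with h
  · simp [h]
  · field_simp; ring

lemma real_exp_sub (u : ℝ) (n : ℕ) :
    ‖Real.exp u - ∑ m ∈ Finset.range n, u ^ m / (m.factorial : ℝ)‖ ≤ ‖u‖ ^ n * Real.exp ‖u‖ := by
  have := Complex.norm_exp_sub_sum_le_norm_mul_exp (u : ℂ) n
  rw [Complex.norm_real] at this
  refine le_trans (le_of_eq ?_) this
  rw [← Complex.norm_real]
  push_cast
  rfl

lemma gfun_bound (u : ℝ) : |gfun u| ≤ Real.exp |u| := by
  unfold gfun
  split_ifs with h
  · simp [h]; norm_num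
  · have := real_exp_sub u 2
    simp [Finset.sum_range_succ] at this
    rw [abs_div, abs_of_pos (by positivity : 0 < u ^ 2), div_le_iff₀ (by positivity)]
    rw [show Real.exp u - 1 - u = Real.exp u - (1 + u) by ring]
    linarith

lemma gfun_near (u : ℝ) : |gfun u - 1 / 2| ≤ |u| * Real.exp |u| := by
  unfold gfun
  split_ifs with h
  · simp [h]
  · have := real_exp_sub u 3
    simp [Finset.sum_range_succ] at this
    have e : (Real.exp u - 1 - u) / u ^ 2 - 1 / 2 = (Real.exp u - (1 + u + u ^ 2 / 2)) / u ^ 2 := by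
      field_simp; ring
    rw [e, abs_div, abs_of_pos (by positivity : 0 < u ^ 2), div_le_iff₀ (by positivity)]
    refine this.trans (le_of_eq ?_)
    rw [pow_succ, sq_abs]; ring

lemma gfun_cont : Continuous gfun := by
  rw [continuous_iff_continuousAt]
  intro x
  by_cases hx : x = 0
  · subst hx
    have h0 : gfun 0 = 1 / 2 := by simp [gfun]
    rw [ContinuousAt, h0, tendsto_iff_norm_sub_tendsto_zero]
    refine squeeze_zero (fun _ => norm_nonneg _) gfun_near ?_
    have : Continuous fun u : ℝ => |u| * Real.exp |u| := by fun_prop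
    simpa using this.tendsto 0
  · have h1 : ContinuousAt (fun u : ℝ => (Real.exp u - 1 - u) / u ^ 2) x := by
      apply ContinuousAt.div (by fun_prop) (by fun_prop) (by positivity)
    apply h1.congr
    filter_upwards [isOpen_ne.mem_nhds hx] with y hy
    simp [gfun, show y ≠ 0 from hy]

lemma posdef_lb (A B C : ℝ) (hA : 0 < A) (hD : 0 < 4 * A * C - B ^ 2) :
    ∃ c : ℝ, 0 < c ∧ ∀ x y : ℝ, c * (x ^ 2 + y ^ 2) ≤ A * x ^ 2 + B * x * y + C * y ^ 2 := by
  have hC : 0 < C := by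
    by_contra hC
    push Not at hC
    nlinarith [sq_nonneg B]
  refine ⟨(4 * A * C - B ^ 2) / (4 * (A + C)), by positivity, ?_⟩
  set c := (4 * A * C - B ^ 2) / (4 * (A + C)) with hc
  have hc' : 4 * c * (A + C) = 4 * A * C - B ^ 2 := by rw [hc]; field_simp
  have hcA : c < A := by
    rw [hc, div_lt_iff₀ (by positivity)]; nlinarith [sq_nonneg B]
  intro x y
  have h1 : 0 ≤ 4 * (A - c) * ((A - c) * x ^ 2 + B * x * y + (C - c) * y ^ 2) := by
    have : 4 * (A - c) * ((A - c) * x ^ 2 + B * x * y + (C - c) * y ^ 2) =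
      (2 * (A - c) * x + B * y) ^ 2 + (2 * c * y) ^ 2 := by linear_combination (-y^2) * hc'
    rw [this]; positivity
  have h2 := nonneg_of_mul_nonneg_right h1 (by linarith : 0 < 4 * (A - c))
  linarith

lemma summ_1d (c α : ℝ) (hc : 0 < c) : Summable fun n : ℕ => Real.exp (-(c * (n + α) ^ 2)) := by
  have h := (Real.summable_exp_neg_nat).mul_left (Real.exp (1 / (4 * c) - α))
  refine Summable.of_nonneg_of_le (fun _ => (Real.exp_pos _).le) (fun n => ?_) h
  rw [← Real.exp_add]
  apply Real.exp_le_exp.2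
  have : 0 ≤ c * ((n + α) - 1 / (2 * c)) ^ 2 := by positivity
  have e : c * ((n + α) - 1 / (2 * c)) ^ 2 = c * (n + α) ^ 2 - (n + α) + 1 / (4 * c) := by
    field_simp; ring
  linarith

lemma summ_2d (A B C : ℝ) (hA : 0 < A) (hD : 0 < 4 * A * C - B ^ 2) (t α β : ℝ) (ht : 0 < t) :
    Summable fun n : ℕ × ℕ => Real.exp (-t * (A * (n.1 + α) ^ 2 + B * (n.1 + α) * (n.2 + β)
      + C * (n.2 + β) ^ 2)) := by
  obtain ⟨c, hc, hP⟩ := posdef_lb A B C hA hD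
  have h := (summ_1d (t * c) α (by positivity)).mul_of_nonneg (summ_1d (t * c) β (by positivity))
    (fun _ => (Real.exp_pos _).le) (fun _ => (Real.exp_pos _).le)
  refine Summable.of_nonneg_of_le (fun _ => (Real.exp_pos _).le) (fun n => ?_) h
  rw [← Real.exp_add]
  apply Real.exp_le_exp.2
  have := mul_le_mul_of_nonneg_left (hP (n.1 + α) (n.2 + β)) ht.le
  linarith

lemma term_bound (A B C c : ℝ) (hc : 0 < c)
    (hP : ∀ x y : ℝ, c * (x ^ 2 + y ^ 2) ≤ A * x ^ 2 + B * x * y + C * y ^ 2) (d e p : ℝ) :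
    ∃ K : ℝ, ∀ δ x y : ℝ, 0 ≤ δ → δ ≤ 1 → 0 ≤ x → 0 ≤ y →
      Real.exp (-(A * x ^ 2 + B * x * y + C * y ^ 2)) *
        |(d * x + e * y + δ * p) ^ 2 * gfun (-(δ * (d * x + e * y + δ * p))) - p| ≤
        K * Real.exp (-(x + y)) := by
  set M := |d| + |e| + |p| with hM
  have hM0 : 0 ≤ M := by positivity
  refine ⟨2 * Real.exp (3 * M + (3 * M + 1) ^ 2 / (2 * c)), ?_⟩
  intro δ x y hδ hδ1 hx hy
  set v := d * x + e * y + δ * p with hv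
  set s := x + y with hs
  have hvb : |v| ≤ M * (s + 1) := by
    have h1 : |v| ≤ |d| * x + |e| * y + δ * |p| := by
      calc |v| ≤ |d * x + e * y| + |δ * p| := abs_add_le _ _
        _ ≤ |d * x| + |e * y| + |δ * p| := by gcongr; exact abs_add_le _ _
        _ = _ := by rw [abs_mul, abs_mul, abs_mul, abs_of_nonneg hx, abs_of_nonneg hy, abs_of_nonneg hδ]
    have := abs_nonneg d
    have := abs_nonneg e
    have := abs_nonneg p
    have h3 : δ * |p| ≤ |p| := by nlinarith
    have : 0 ≤ |d| * y := by positivity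
    have : 0 ≤ |e| * x := by positivity
    have : 0 ≤ |p| * s := by positivity
    have e1 : M * (s + 1) = |d| * x + |d| * y + |e| * x + |e| * y + |p| * s + |d| + |e| + |p| := by
      rw [hM, hs]; ring
    linarith
  have hs0 : 0 ≤ s := by positivity
  set E := Real.exp (M * (s + 1)) with hE
  have hE1 : 1 ≤ E := Real.one_le_exp (by positivity)
  have hME : M * (s + 1) ≤ E := by linarith [Real.add_one_le_exp (M * (s + 1))]
  have hpE : |p| ≤ E := by
    have : |p| ≤ M := by rw [hM]; linarith [abs_nonneg d, abs_nonneg e]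
    have : M ≤ M * (s + 1) := by nlinarith
    linarith
  have hg : |gfun (-(δ * v))| ≤ E := by
    refine (gfun_bound _).trans (Real.exp_le_exp.2 ?_)
    rw [abs_neg, abs_mul, abs_of_nonneg hδ]
    nlinarith [abs_nonneg v]
  have hv2 : v ^ 2 ≤ E ^ 2 := by
    rw [← sq_abs v]; gcongr; exact hvb.trans hME
  have h2 : |v ^ 2 * gfun (-(δ * v)) - p| ≤ 2 * E ^ 3 := by
    calc _ ≤ |v ^ 2 * gfun (-(δ * v))| + |p| := abs_sub _ _
      _ ≤ E ^ 2 * E + E := by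
        rw [abs_mul, abs_of_nonneg (sq_nonneg v)]
        gcongr
      _ ≤ _ := by nlinarith [mul_nonneg (by linarith : 0 ≤ E) (by nlinarith : 0 ≤ E ^ 2 - 1)]
  have h3 : Real.exp (-(A * x ^ 2 + B * x * y + C * y ^ 2)) ≤ Real.exp (-(c * s ^ 2 / 2)) := by
    apply Real.exp_le_exp.2
    have := hP x y
    have : s ^ 2 ≤ 2 * (x ^ 2 + y ^ 2) := by rw [hs]; nlinarith [sq_nonneg (x - y)]
    nlinarith
  calc _ ≤ Real.exp (-(c * s ^ 2 / 2)) * (2 * E ^ 3) := by gcongr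
    _ = 2 * Real.exp (-(c * s ^ 2 / 2) + 3 * (M * (s + 1))) := by
      rw [Real.exp_add, hE, ← Real.exp_nat_mul]; push_cast; ring
    _ ≤ _ := by
      rw [mul_assoc, ← Real.exp_add]
      refine mul_le_mul_of_nonneg_left (Real.exp_le_exp.2 ?_) (by norm_num)
      have : 0 ≤ c / 2 * (s - (3 * M + 1) / c) ^ 2 := by positivity
      have e2 : c / 2 * (s - (3 * M + 1) / c) ^ 2 =
        c * s ^ 2 / 2 - (3 * M + 1) * s + (3 * M + 1) ^ 2 / (2 * c) := by field_simp; ring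
      linarith

open MeasureTheory in
lemma sum_eq_integral (ε : ℝ) (hε : 0 < ε) (G : ℕ × ℕ → ℂ)
    (hG : IntegrableOn (fun y : ℝ × ℝ => G (⌊y.1 / ε⌋₊, ⌊y.2 / ε⌋₊)) (Set.Ici 0 ×ˢ Set.Ici 0)) :
    ∫ y in (Set.Ici (0:ℝ) ×ˢ Set.Ici (0:ℝ)), G (⌊y.1 / ε⌋₊, ⌊y.2 / ε⌋₊) =
      (ε : ℂ) ^ 2 * ∑' m, G m := by
  let I : ℕ → Set ℝ := fun n => Set.Ico (n * ε) ((n + 1) * ε)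
  have hI : ∀ n (x : ℝ), x ∈ I n ↔ 0 ≤ x ∧ ⌊x / ε⌋₊ = n := by
    intro n x
    simp only [I, Set.mem_Ico]
    constructor
    · rintro ⟨h1, h2⟩
      have hx : 0 ≤ x := le_trans (by positivity) h1
      refine ⟨hx, ?_⟩
      rw [Nat.floor_eq_iff (by positivity), le_div_iff₀ hε, div_lt_iff₀ hε]
      exact ⟨h1, h2⟩
    · rintro ⟨hx, h⟩
      rw [Nat.floor_eq_iff (by positivity), le_div_iff₀ hε, div_lt_iff₀ hε] at h
      exact h
  let s : ℕ × ℕ → Set (ℝ × ℝ) := fun m => I m.1 ×ˢ I m.2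
  have hU : Set.Ici (0:ℝ) ×ˢ Set.Ici (0:ℝ) = ⋃ m, s m := by
    ext ⟨x, y⟩
    simp only [Set.mem_prod, Set.mem_Ici, Set.mem_iUnion, s, hI]
    constructor
    · rintro ⟨h1, h2⟩
      exact ⟨(⌊x / ε⌋₊, ⌊y / ε⌋₊), ⟨h1, rfl⟩, h2, rfl⟩
    · rintro ⟨m, ⟨h1, _⟩, h2, _⟩
      exact ⟨h1, h2⟩
  have hm : ∀ m, MeasurableSet (s m) := fun m => measurableSet_Ico.prod measurableSet_Ico
  have hd : Pairwise (Function.onFun Disjoint s) := by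
    intro m m' hne
    rw [Function.onFun, Set.disjoint_left]
    rintro ⟨x, y⟩ h h'
    simp only [Set.mem_prod, s, hI] at h h'
    apply hne
    ext
    · exact h.1.2.symm.trans h'.1.2
    · exact h.2.2.symm.trans h'.2.2
  rw [hU] at hG ⊢
  have key := hasSum_integral_iUnion hm hd hG
  rw [← key.tsum_eq, ← tsum_mul_left]
  congr 1
  ext m
  have h1 : ∫ y in s m, G (⌊y.1 / ε⌋₊, ⌊y.2 / ε⌋₊) = ∫ y in s m, G m := by
    apply setIntegral_congr_fun (hm m)
    rintro ⟨x, y⟩ h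
    simp only [Set.mem_prod, s, hI] at h
    simp only [h.1.2, h.2.2]
  rw [h1, setIntegral_const]
  have h2 : (volume : Measure (ℝ × ℝ)).real (s m) = ε ^ 2 := by
    simp only [s, I, Measure.real, Measure.volume_eq_prod, Measure.prod_prod, Real.volume_Ico]
    rw [show ((m.1 : ℝ) + 1) * ε - m.1 * ε = ε by ring, show ((m.2 : ℝ) + 1) * ε - m.2 * ε = ε by ring]
    rw [ENNReal.toReal_mul, ENNReal.toReal_ofReal hε.le]; ring
  rw [h2]; simp

open MeasureTheory in
lemma riemann_limit (H : ℝ → ℝ → ℝ → ℂ) (K k : ℝ) (hk : 0 < k)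
    (hHc : Continuous fun z : ℝ × ℝ × ℝ => H z.1 z.2.1 z.2.2)
    (hK : ∀ δ x y : ℝ, 0 ≤ δ → δ ≤ 1 → 0 ≤ x → 0 ≤ y →
      ‖H δ x y‖ ≤ K * Real.exp (-(x + y))) :
    ∃ c : ℂ, Tendsto (fun δ : ℝ => (δ : ℂ) ^ 2 * ∑' m : ℕ × ℕ, H δ (k * δ * m.1) (k * δ * m.2))
      (𝓝[>] 0) (𝓝 c) := by
  have hK0 : 0 ≤ K := by
    have := (norm_nonneg (H 0 0 0)).trans (hK 0 0 0 le_rfl zero_le_one le_rfl le_rfl)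
    simpa using this
  let S : Set (ℝ × ℝ) := Set.Ici (0:ℝ) ×ˢ Set.Ici (0:ℝ)
  have hSm : MeasurableSet S := measurableSet_Ici.prod measurableSet_Ici
  let bound : ℝ × ℝ → ℝ := fun y => K * Real.exp (2 * k) * (Real.exp (-y.1) * Real.exp (-y.2))
  have hbi : IntegrableOn bound S := by
    have h1 : IntegrableOn (fun x : ℝ => Real.exp (-x)) (Set.Ici 0) := by
      rw [integrableOn_Ici_iff_integrableOn_Ioi]
      exact integrableOn_exp_neg_Ioi 0
    have h2 : Integrable (fun z : ℝ × ℝ => Real.exp (-z.1) * Real.exp (-z.2))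
      ((volume.restrict (Set.Ici 0)).prod (volume.restrict (Set.Ici 0))) := Integrable.mul_prod h1 h1
    rw [Measure.prod_restrict] at h2
    exact h2.const_mul _
  let F : ℝ → ℝ × ℝ → ℂ := fun δ y =>
    H δ (k * δ * ⌊y.1 / (k * δ)⌋₊) (k * δ * ⌊y.2 / (k * δ)⌋₊)
  have hFm : ∀ δ, Measurable (F δ) := by
    intro δ
    have : F δ = (fun m : ℕ × ℕ => H δ (k * δ * m.1) (k * δ * m.2)) ∘
      (fun y : ℝ × ℝ => (⌊y.1 / (k * δ)⌋₊, ⌊y.2 / (k * δ)⌋₊)) := rfl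
    rw [this]
    apply Measurable.comp (measurable_of_countable _)
    apply Measurable.prodMk
    · exact Nat.measurable_floor.comp (measurable_fst.div_const _)
    · exact Nat.measurable_floor.comp (measurable_snd.div_const _)
  have hfl : ∀ ε x : ℝ, 0 < ε → 0 ≤ x → x - ε ≤ ε * ⌊x / ε⌋₊ ∧ ε * ⌊x / ε⌋₊ ≤ x := by
    intro ε x hε hx
    have h1 := Nat.floor_le (show 0 ≤ x / ε by positivity)
    have h2 := Nat.lt_floor_add_one (x / ε)
    rw [le_div_iff₀ hε] at h1
    rw [div_lt_iff₀ hε] at h2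
    constructor <;> linarith
  have hFb : ∀ δ, 0 < δ → δ ≤ 1 → ∀ y ∈ S, ‖F δ y‖ ≤ bound y := by
    rintro δ hδ hδ1 ⟨x, y⟩ ⟨hx, hy⟩
    simp only [Set.mem_Ici] at hx hy
    have hkd : 0 < k * δ := by positivity
    have hkd1 : k * δ ≤ k := by nlinarith
    refine (hK δ _ _ hδ.le hδ1 (by positivity) (by positivity)).trans ?_
    simp only [bound]
    rw [mul_assoc K, ← Real.exp_add, ← Real.exp_add]
    refine mul_le_mul_of_nonneg_left (Real.exp_le_exp.2 ?_) hK0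
    have := (hfl (k * δ) x hkd hx).1
    have := (hfl (k * δ) y hkd hy).1
    linarith
  have hmem : ∀ᶠ δ : ℝ in 𝓝[>] 0, 0 < δ ∧ δ ≤ 1 := by
    filter_upwards [Ioo_mem_nhdsGT (zero_lt_one : (0:ℝ) < 1)] with δ hδ
    exact ⟨hδ.1, hδ.2.le⟩
  have hlimF : Tendsto (fun δ => ∫ y in S, F δ y) (𝓝[>] 0) (𝓝 (∫ y in S, H 0 y.1 y.2)) := by
    apply tendsto_integral_filter_of_dominated_convergence bound
    · exact Eventually.of_forall fun δ => (hFm δ).aestronglyMeasurable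
    · filter_upwards [hmem] with δ hδ
      exact (ae_restrict_iff' hSm).2 (Eventually.of_forall (hFb δ hδ.1 hδ.2))
    · exact hbi
    · refine (ae_restrict_iff' hSm).2 (Eventually.of_forall ?_)
      rintro ⟨x, y⟩ ⟨hx, hy⟩
      simp only [Set.mem_Ici] at hx hy
      have hid0 : Tendsto (fun δ : ℝ => δ) (𝓝[>] 0) (𝓝 0) := tendsto_nhdsWithin_of_tendsto_nhds tendsto_id
      have hf : ∀ x : ℝ, 0 ≤ x → Tendsto (fun δ : ℝ => k * δ * (⌊x / (k * δ)⌋₊ : ℝ)) (𝓝[>] 0) (𝓝 x) := by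
        intro x hx
        have hl : Tendsto (fun δ : ℝ => x - k * δ) (𝓝[>] 0) (𝓝 x) := by
          simpa using (tendsto_const_nhds (x := x)).sub (hid0.const_mul k)
        refine tendsto_of_tendsto_of_tendsto_of_le_of_le' hl tendsto_const_nhds ?_ ?_
        · filter_upwards [hmem] with δ hδ
          exact (hfl (k * δ) x (mul_pos hk hδ.1) hx).1
        · filter_upwards [hmem] with δ hδ
          exact (hfl (k * δ) x (mul_pos hk hδ.1) hx).2
      have hz := (hid0.prodMk_nhds ((hf x hx).prodMk_nhds (hf y hy)))
      exact (hHc.tendsto (0, x, y)).comp hz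
  refine ⟨((k : ℂ) ^ 2)⁻¹ * ∫ y in S, H 0 y.1 y.2, ?_⟩
  refine (hlimF.const_mul (((k : ℂ) ^ 2)⁻¹)).congr' ?_
  filter_upwards [hmem] with δ ht
  have hkd : 0 < k * δ := mul_pos hk ht.1
  have hint : IntegrableOn (F δ) S :=
    Integrable.mono' hbi (hFm δ).aestronglyMeasurable
      ((ae_restrict_iff' hSm).2 (Eventually.of_forall (hFb δ ht.1 ht.2)))
  have key := sum_eq_integral (k * δ) hkd (fun m : ℕ × ℕ => H δ (k * δ * m.1) (k * δ * m.2)) hint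
  have key' : ∫ y in S, F δ y = ((k * δ : ℝ) : ℂ) ^ 2 *
    ∑' m : ℕ × ℕ, H δ (k * δ * m.1) (k * δ * m.2) := key
  rw [key']
  have hkc : (k : ℂ) ≠ 0 := by exact_mod_cast hk.ne'
  have e3 : ((k : ℂ) ^ 2)⁻¹ * (((k * δ : ℝ) : ℂ) ^ 2 * ∑' m : ℕ × ℕ, H δ (k * δ * m.1) (k * δ * m.2))
    = (δ : ℂ) ^ 2 * ∑' m : ℕ × ℕ, H δ (k * δ * m.1) (k * δ * m.2) := by
    push_cast; field_simp
  exact e3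

lemma analytic_limit {ι : Type*} [Fintype ι] (w : ι → ℂ) (a b : ι → ℝ) (A B C : ℝ) (hA : 0 < A)
    (hD : 0 < 4 * A * C - B ^ 2) (k : ℝ) (hk : 0 < k) (h0 : ∑ i, w i = 0)
    (h1 : ∑ i, w i * (a i : ℂ) = 0) (h2 : ∑ i, w i * (b i : ℂ) = 0) :
    ∃ c : ℂ, Tendsto (fun t : ℝ => ∑' m : ℕ × ℕ, ∑ i, w i *
      ((Real.exp (-t * (A * (k * m.1 + a i) ^ 2 + B * (k * m.1 + a i) * (k * m.2 + b i)
        + C * (k * m.2 + b i) ^ 2)) : ℝ) : ℂ)) (𝓝[>] 0) (𝓝 c) := by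
  obtain ⟨c, hc, hP⟩ := posdef_lb A B C hA hD
  let d : ι → ℝ := fun i => 2 * A * a i + B * b i
  let e : ι → ℝ := fun i => B * a i + 2 * C * b i
  let p : ι → ℝ := fun i => A * a i ^ 2 + B * a i * b i + C * b i ^ 2
  let v : ι → ℝ → ℝ → ℝ → ℝ := fun i δ x y => d i * x + e i * y + δ * p i
  let H : ℝ → ℝ → ℝ → ℂ := fun δ x y =>
    ∑ i, w i * ((Real.exp (-(A * x ^ 2 + B * x * y + C * y ^ 2)) *
      ((v i δ x y) ^ 2 * gfun (-(δ * v i δ x y)) - p i) : ℝ) : ℂ)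
  have hHc : Continuous fun z : ℝ × ℝ × ℝ => H z.1 z.2.1 z.2.2 := by
    have := gfun_cont
    simp only [H, v]
    fun_prop
  -- the algebraic identity
  have hid : ∀ δ x y : ℝ, ∑ i, w i * ((Real.exp (-(A * (x + δ * a i) ^ 2 +
      B * (x + δ * a i) * (y + δ * b i) + C * (y + δ * b i) ^ 2)) : ℝ) : ℂ) = (δ : ℂ) ^ 2 * H δ x y := by
    intro δ x y
    have hterm : ∀ i, w i * ((Real.exp (-(A * (x + δ * a i) ^ 2 +
      B * (x + δ * a i) * (y + δ * b i) + C * (y + δ * b i) ^ 2)) : ℝ) : ℂ) =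
      (δ : ℂ) ^ 2 * (w i * ((Real.exp (-(A * x ^ 2 + B * x * y + C * y ^ 2)) *
      ((v i δ x y) ^ 2 * gfun (-(δ * v i δ x y)) - p i) : ℝ) : ℂ)) +
      ((Real.exp (-(A * x ^ 2 + B * x * y + C * y ^ 2)) : ℝ) : ℂ) *
        (w i - (δ * (2 * A * x + B * y) : ℝ) * (w i * a i) - (δ * (B * x + 2 * C * y) : ℝ) * (w i * b i)) := by
      intro i
      have e1 : -(A * (x + δ * a i) ^ 2 + B * (x + δ * a i) * (y + δ * b i) + C * (y + δ * b i) ^ 2)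
        = -(A * x ^ 2 + B * x * y + C * y ^ 2) + (-(δ * v i δ x y)) := by
        simp only [v, d, e, p]; ring
      rw [e1, Real.exp_add, gfun_spec (-(δ * v i δ x y))]
      generalize gfun (-(δ * v i δ x y)) = g
      simp only [v, d, e, p]
      push_cast
      ring
    rw [Finset.sum_congr rfl fun i _ => hterm i, Finset.sum_add_distrib, ← Finset.mul_sum,
      ← Finset.mul_sum, Finset.sum_sub_distrib, Finset.sum_sub_distrib, ← Finset.mul_sum,
      ← Finset.mul_sum, h0, h1, h2]
    simp [H]
  -- bound
  have hbd : ∃ K : ℝ, ∀ δ x y : ℝ, 0 ≤ δ → δ ≤ 1 → 0 ≤ x → 0 ≤ y →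
      ‖H δ x y‖ ≤ K * Real.exp (-(x + y)) := by
    choose K hK using fun i => term_bound A B C c hc hP (d i) (e i) (p i)
    refine ⟨∑ i, ‖w i‖ * K i, fun δ x y hδ hδ1 hx hy => ?_⟩
    refine (norm_sum_le _ _).trans ?_
    rw [Finset.sum_mul]
    refine Finset.sum_le_sum fun i _ => ?_
    rw [norm_mul, mul_assoc ‖w i‖, Complex.norm_real, norm_mul, Real.norm_eq_abs, Real.norm_eq_abs, Real.abs_exp]
    exact mul_le_mul_of_nonneg_left (hK i δ x y hδ hδ1 hx hy) (norm_nonneg (w i))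
  obtain ⟨K, hK⟩ := hbd
  obtain ⟨z, hz⟩ := riemann_limit H K k hk hHc hK
  have hsq : Tendsto (fun t : ℝ => √t) (𝓝[>] 0) (𝓝[>] 0) := by
    rw [tendsto_nhdsWithin_iff]
    constructor
    · apply tendsto_nhdsWithin_of_tendsto_nhds
      simpa using Real.continuous_sqrt.tendsto 0
    · filter_upwards [self_mem_nhdsWithin] with t ht
      exact Real.sqrt_pos.2 ht
  refine ⟨z, (hz.comp hsq).congr' ?_⟩
  filter_upwards [self_mem_nhdsWithin] with t ht0
  simp only [Set.mem_Ioi] at ht0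
  rw [Function.comp]
  set δ := √t with hδ
  rw [← tsum_mul_left]
  congr 1
  ext m
  rw [← hid]
  refine Finset.sum_congr rfl fun i _ => ?_
  have ht' : t = δ ^ 2 := (Real.sq_sqrt ht0.le).symm
  congr 3
  rw [ht']
  ring

lemma eQ_add (x y : ℚ) : eQ (x + y) = eQ x * eQ y := by
  unfold eQ; rw [← Complex.exp_add]; push_cast; ring_nf

lemma eQ_eq_one (x : ℚ) : eQ x = 1 ↔ ∃ n : ℤ, x = n := by
  unfold eQ
  rw [Complex.exp_eq_one_iff]
  have hp : (2 * Real.pi * Complex.I : ℂ) ≠ 0 := Complex.two_pi_I_ne_zero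
  constructor
  · rintro ⟨n, hn⟩
    refine ⟨n, ?_⟩
    rw [mul_comm] at hn
    have := mul_right_cancel₀ hp hn
    exact_mod_cast this
  · rintro ⟨n, rfl⟩
    exact ⟨n, by push_cast; ring⟩

lemma eQ_norm (x : ℚ) : ‖eQ x‖ = 1 := by
  unfold eQ
  rw [show (2 * Real.pi * Complex.I * (x : ℂ) : ℂ) = ((2 * Real.pi * x : ℝ) : ℂ) * Complex.I by
    push_cast; ring]
  exact Complex.norm_exp_ofReal_mul_I _

lemma eQ_congr {x y : ℚ} (n : ℤ) (h : x = y + n) : eQ x = eQ y := by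
  rw [h, eQ_add, (eQ_eq_one _).2 ⟨n, rfl⟩, mul_one]

noncomputable def Ph (h : ℤ) (k : ℕ) (N₁ N₂ μ₁ μ₃ X Y : ℤ) : ℂ :=
  eQ ((h : ℚ) / k * (μ₁ * X ^ 2 / N₁ + X * Y + μ₃ * Y ^ 2 / N₂))

lemma Ph_symm (h : ℤ) (k : ℕ) (N₁ N₂ μ₁ μ₃ X Y : ℤ) :
    Ph h k N₁ N₂ μ₁ μ₃ X Y = Ph h k N₂ N₁ μ₃ μ₁ Y X := by
  unfold Ph; congr 1; ring

lemma Ph_neg (h : ℤ) (k : ℕ) (N₁ N₂ μ₁ μ₃ X Y : ℤ) :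
    Ph h k N₁ N₂ μ₁ μ₃ (-X) (-Y) = Ph h k N₁ N₂ μ₁ μ₃ X Y := by
  unfold Ph; congr 1; push_cast; ring

/-- general comparison -/
lemma Ph_congr (h : ℤ) (k : ℕ) (hk : 0 < k) (N₁ N₂ μ₁ μ₃ X X' Y : ℤ) (hN₁ : N₁ ≠ 0)
    (h1 : (k : ℤ) ∣ X' - X) (h2 : N₁ * k ∣ X' ^ 2 - X ^ 2) :
    Ph h k N₁ N₂ μ₁ μ₃ X' Y = Ph h k N₁ N₂ μ₁ μ₃ X Y := by
  obtain ⟨u, hu⟩ := h1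
  obtain ⟨v, hv⟩ := h2
  unfold Ph
  apply eQ_congr (h * (μ₁ * v + u * Y))
  have hu' : (X' : ℚ) - X = k * u := by exact_mod_cast hu
  have hv' : (X' : ℚ) ^ 2 - X ^ 2 = N₁ * k * v := by exact_mod_cast hv
  have hX : (X' : ℚ) = X + k * u := by linarith
  have hX2 : (X' : ℚ) ^ 2 = X ^ 2 + N₁ * k * v := by linarith
  have hN : (N₁ : ℚ) ≠ 0 := by exact_mod_cast hN₁
  have hk' : (k : ℚ) ≠ 0 := by exact_mod_cast hk.ne'
  rw [hX2, hX]
  push_cast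
  field_simp
  ring

lemma Ph_per (h : ℤ) (k : ℕ) (hk : 0 < k) (N₁ N₂ μ₁ μ₃ X Y m : ℤ) (hN₁ : N₁ ≠ 0) :
    Ph h k N₁ N₂ μ₁ μ₃ (X + N₁ * (k * m)) Y = Ph h k N₁ N₂ μ₁ μ₃ X Y := by
  apply Ph_congr h k hk _ _ _ _ _ _ _ hN₁
  · exact ⟨N₁ * m, by ring⟩
  · exact ⟨m * (2 * X + N₁ * k * m), by ring⟩

lemma Ph_per2 (h : ℤ) (k : ℕ) (hk : 0 < k) (N₁ N₂ μ₁ μ₃ X Y m : ℤ) (hN₂ : N₂ ≠ 0) :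
    Ph h k N₁ N₂ μ₁ μ₃ X (Y + N₂ * (k * m)) = Ph h k N₁ N₂ μ₁ μ₃ X Y := by
  rw [Ph_symm, Ph_per _ _ hk _ _ _ _ _ _ _ hN₂, Ph_symm]

lemma sum_shift (k : ℕ) (ψ : ℤ → ℂ) (hψ : ∀ n, ψ (n + k) = ψ n) (c : ℤ) :
    ∑ l ∈ Finset.range k, ψ (l + c) = ∑ l ∈ Finset.range k, ψ l := by
  have step : ∀ c : ℤ, ∑ l ∈ Finset.range k, ψ (l + (c + 1)) = ∑ l ∈ Finset.range k, ψ (l + c) := by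
    intro c
    have h1 := Finset.sum_range_succ (fun l : ℕ => ψ (l + c)) k
    have h2 := Finset.sum_range_succ' (fun l : ℕ => ψ (l + c)) k
    have h3 : ψ ((k : ℤ) + c) = ψ (((0 : ℕ) : ℤ) + c) := by
      rw [add_comm, hψ]; simp
    rw [h1, h3] at h2
    have h4 := add_right_cancel h2
    rw [h4]
    refine Finset.sum_congr rfl fun l _ => ?_
    congr 1; push_cast; ring
  induction c using Int.induction_on with
  | zero => simp
  | succ n ih => rw [step, ih]
  | pred n ih => rw [← ih, ← step]; simp

noncomputable def Gs (h : ℤ) (k : ℕ) (N₁ N₂ μ₁ μ₃ x y : ℤ) : ℂ :=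
  ∑ l₁ ∈ Finset.range k, ∑ l₂ ∈ Finset.range k, Ph h k N₁ N₂ μ₁ μ₃ (N₁ * l₁ + x) (N₂ * l₂ + y)

lemma Gs_symm (h : ℤ) (k : ℕ) (N₁ N₂ μ₁ μ₃ x y : ℤ) :
    Gs h k N₁ N₂ μ₁ μ₃ x y = Gs h k N₂ N₁ μ₃ μ₁ y x := by
  unfold Gs
  rw [Finset.sum_comm]
  refine Finset.sum_congr rfl fun l _ => Finset.sum_congr rfl fun l' _ => ?_
  rw [Ph_symm]

lemma shift1 (h : ℤ) (k : ℕ) (hk : 0 < k) (N₁ N₂ μ₁ μ₃ x Y : ℤ) (hN₁ : N₁ ≠ 0) (c : ℤ) :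
    ∑ l ∈ Finset.range k, Ph h k N₁ N₂ μ₁ μ₃ (N₁ * (l + c) + x) Y =
    ∑ l ∈ Finset.range k, Ph h k N₁ N₂ μ₁ μ₃ (N₁ * l + x) Y := by
  apply sum_shift k (fun l => Ph h k N₁ N₂ μ₁ μ₃ (N₁ * l + x) Y)
  intro n
  have := Ph_per h k hk N₁ N₂ μ₁ μ₃ (N₁ * n + x) Y 1 hN₁
  rw [← this]; congr 1; ring

lemma Gs_zero (h : ℤ) (k : ℕ) (hk : 0 < k) (N₁ N₂ μ₁ μ₃ x y : ℤ) (hN₁ : N₁ ≠ 0) (d : ℤ)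
    (hdk : d ∣ k) (hd1 : d ∣ μ₁ * N₁) (hd2 : d ∣ N₁ * N₂) (hnd : ¬ d ∣ h * (2 * μ₁ * x + N₁ * y)) :
    Gs h k N₁ N₂ μ₁ μ₃ x y = 0 := by
  unfold Gs
  rw [Finset.sum_comm]
  refine Finset.sum_eq_zero fun l₂ _ => ?_
  obtain ⟨m, hm⟩ := hdk
  obtain ⟨u, hu⟩ := hd1
  obtain ⟨v, hv⟩ := hd2
  have hk' : (k : ℚ) ≠ 0 := by exact_mod_cast hk.ne'
  have hmq : (k : ℚ) = d * m := by exact_mod_cast hm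
  have hd0 : (d : ℚ) ≠ 0 := by rintro h0; rw [h0] at hmq; simp at hmq; omega
  have hm0 : (m : ℚ) ≠ 0 := by rintro h0; rw [h0] at hmq; simp at hmq; omega
  have huq : (μ₁ : ℚ) * N₁ = d * u := by exact_mod_cast hu
  have hvq : (N₁ : ℚ) * N₂ = d * v := by exact_mod_cast hv
  have hN : (N₁ : ℚ) ≠ 0 := by exact_mod_cast hN₁
  set ζ := eQ ((h * (2 * μ₁ * x + N₁ * y) : ℤ) / (d : ℚ)) with hζ
  have hζ1 : ζ ≠ 1 := by
    rw [hζ, Ne, eQ_eq_one]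
    rintro ⟨n, hn⟩
    apply hnd
    refine ⟨n, ?_⟩
    rw [div_eq_iff hd0] at hn
    have : h * (2 * μ₁ * x + N₁ * y) = n * d := by exact_mod_cast hn
    rw [this]; ring
  have hs := shift1 h k hk N₁ N₂ μ₁ μ₃ x (N₂ * l₂ + y) hN₁ m
  have ht : ∀ l : ℕ, Ph h k N₁ N₂ μ₁ μ₃ (N₁ * (l + m) + x) (N₂ * l₂ + y) =
      Ph h k N₁ N₂ μ₁ μ₃ (N₁ * l + x) (N₂ * l₂ + y) * ζ := by
    intro l
    rw [hζ]
    unfold Ph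
    rw [← eQ_add]
    apply eQ_congr (h * (2 * u * l + u * m + v * l₂))
    rw [hmq]
    have e1 : (u : ℚ) = μ₁ * N₁ / d := by rw [huq]; field_simp
    have e2 : (v : ℚ) = N₁ * N₂ / d := by rw [hvq]; field_simp
    push_cast
    rw [e1, e2]
    field_simp
    ring
  rw [Finset.sum_congr rfl fun l _ => ht l, ← Finset.sum_mul] at hs
  have : (∑ l ∈ Finset.range k, Ph h k N₁ N₂ μ₁ μ₃ (N₁ * l + x) (N₂ * l₂ + y)) * (ζ - 1) = 0 := by
    rw [mul_sub, hs]; ring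
  exact (mul_eq_zero.1 this).resolve_right (sub_ne_zero.2 hζ1)

lemma Gs_eq (h : ℤ) (k : ℕ) (hk : 0 < k) (N₁ N₂ μ₁ μ₃ x x' y : ℤ) (hN₁ : N₁ ≠ 0) (hN₁e : Even N₁)
    (k' e : ℤ) (hke : (k : ℤ) = k' * e) (he : e ∣ 2) (hcop : IsCoprime k' (2 * N₁))
    (hx : Odd x) (hx' : Odd x') (hsq : 2 * N₁ ∣ x' ^ 2 - x ^ 2) :
    Gs h k N₁ N₂ μ₁ μ₃ x' y = Gs h k N₁ N₂ μ₁ μ₃ x y := by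
  unfold Gs
  conv_lhs => rw [Finset.sum_comm]
  conv_rhs => rw [Finset.sum_comm]
  refine Finset.sum_congr rfl fun l₂ _ => ?_
  have hc1 : IsCoprime k' N₁ := hcop.of_mul_right_right
  have hc2 : IsCoprime k' e := (hcop.of_mul_right_left).of_isCoprime_of_dvd_right he
  obtain ⟨p, q, hpq⟩ := hc1
  set c := q * (x - x') with hc
  have hdiv : (k : ℤ) ∣ N₁ * c + x' - x := by
    rw [hke]
    refine hc2.mul_dvd ?_ (he.trans ?_)
    · refine ⟨p * (x' - x), ?_⟩
      rw [hc]
      linear_combination (x' - x) * (-hpq)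
    · have h1 : Even (N₁ * c) := hN₁e.mul_right c
      have h2 : Even (x' - x) := hx'.sub_odd hx
      have := h1.add h2
      rw [← even_iff_two_dvd, show N₁ * c + x' - x = N₁ * c + (x' - x) by ring]
      exact this
  rw [← shift1 h k hk N₁ N₂ μ₁ μ₃ x' (N₂ * l₂ + y) hN₁ c]
  refine Finset.sum_congr rfl fun l _ => ?_
  apply Ph_congr h k hk _ _ _ _ _ _ _ hN₁
  · convert hdiv using 1; ring
  · have hsq' : ∀ z w : ℤ, 2 * N₁ ∣ (N₁ * z + w) ^ 2 - w ^ 2 := by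
      intro z w
      obtain ⟨n, hn⟩ := hN₁e
      exact ⟨z * (n * z + w), by rw [hn]; ring⟩
    have h2 : 2 * N₁ ∣ (N₁ * (l + c) + x') ^ 2 - (N₁ * l + x) ^ 2 := by
      have := dvd_add (dvd_sub (hsq' (l + c) x') (hsq' l x)) hsq
      rw [show (N₁ * (l + c) + x') ^ 2 - (N₁ * l + x) ^ 2 = (N₁ * (l + c) + x') ^ 2 - x' ^ 2 -
        ((N₁ * l + x) ^ 2 - x ^ 2) + (x' ^ 2 - x ^ 2) by ring]
      exact this
    have h3 : k' ∣ (N₁ * (l + c) + x') ^ 2 - (N₁ * l + x) ^ 2 := by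
      have h4 : k' ∣ N₁ * c + x' - x := (Dvd.intro _ hke.symm).trans hdiv
      have : (N₁ * (l + c) + x') ^ 2 - (N₁ * l + x) ^ 2 = (N₁ * c + x' - x) *
        (N₁ * (l + c) + x' + (N₁ * l + x)) := by ring
      rw [this]; exact h4.mul_right _
    have h5 := hcop.mul_dvd h3 h2
    refine dvd_trans ?_ h5
    rw [hke]
    obtain ⟨f, hf⟩ := he
    exact ⟨f, by rw [hf]; ring⟩

lemma dichotomy (h : ℤ) (k : ℕ) (hk : 0 < k) (hhk : IsCoprime h (k : ℤ)) (N₁ N₂ L R₁ R₂ μ₁ μ₃ : ℤ)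
    (hN₁ : N₁ ≠ 0) (hN₂ : N₂ ≠ 0) (hN₁e : Even N₁) (hN₂e : Even N₂) (hLe : Even L)
    (hR₁ : N₁ = L * R₁) (hR₂ : N₂ = L * R₂)
    (hcop₁ : IsCoprime R₁ μ₁) (hcop₃ : IsCoprime R₂ μ₃)
    (hLμ : ∀ p : ℤ, Prime p → p ∣ L → p ∣ μ₁ → p ∣ μ₃ → False)
    (h4L : ¬ (4 ∣ L) → Even R₁ ∨ Even R₂ ∨ (Even μ₃ ∧ ¬ Even R₂)) :
    (∀ x y : ℤ, IsCoprime x N₁ → IsCoprime y N₂ → Gs h k N₁ N₂ μ₁ μ₃ x y = 0) ∨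
    (∀ x y x' y' : ℤ, Odd x → Odd y → Odd x' → Odd y' → 2 * N₁ ∣ x' ^ 2 - x ^ 2 →
      2 * N₂ ∣ y' ^ 2 - y ^ 2 → Gs h k N₁ N₂ μ₁ μ₃ x' y' = Gs h k N₁ N₂ μ₁ μ₃ x y) := by
  have cop_dvd : ∀ p a b : ℤ, Prime p → IsCoprime a b → p ∣ a → p ∣ b → False := by
    intro p a b hp hab ha hb
    exact hp.not_isUnit (hab.isUnit_of_dvd' ha hb)
  have oddp : ∀ p : ℤ, Prime p → ¬ p ∣ 2 → p ∣ k → p ∣ N₁ * N₂ →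
      ∀ x y : ℤ, IsCoprime x N₁ → IsCoprime y N₂ → Gs h k N₁ N₂ μ₁ μ₃ x y = 0 := by
    intro p hp hp2 hpk hpN x y hx hy
    have hph : ¬ p ∣ h := fun hh => cop_dvd p h k hp hhk hh hpk
    have c1 : p ∣ N₁ → ¬ p ∣ μ₁ → Gs h k N₁ N₂ μ₁ μ₃ x y = 0 := by
      intro h1 h2
      apply Gs_zero h k hk _ _ _ _ _ _ hN₁ p hpk (h1.mul_left _) hpN
      intro hd
      have hd := (hp.dvd_or_dvd hd).resolve_left hph
      have hd : p ∣ 2 * μ₁ * x := (dvd_add_left (h1.mul_right y)).1 hd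
      rcases hp.dvd_or_dvd hd with hd | hd
      · rcases hp.dvd_or_dvd hd with hd | hd
        · exact hp2 hd
        · exact h2 hd
      · exact cop_dvd p x N₁ hp hx hd h1
    have c2 : p ∣ N₂ → ¬ p ∣ μ₃ → Gs h k N₁ N₂ μ₁ μ₃ x y = 0 := by
      intro h1 h2
      rw [Gs_symm]
      apply Gs_zero h k hk _ _ _ _ _ _ hN₂ p hpk (h1.mul_left _) (by rwa [mul_comm])
      intro hd
      have hd := (hp.dvd_or_dvd hd).resolve_left hph
      have hd : p ∣ 2 * μ₃ * y := (dvd_add_left (h1.mul_right x)).1 hd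
      rcases hp.dvd_or_dvd hd with hd | hd
      · rcases hp.dvd_or_dvd hd with hd | hd
        · exact hp2 hd
        · exact h2 hd
      · exact cop_dvd p y N₂ hp hy hd h1
    by_cases hpL : p ∣ L
    · have a1 : p ∣ N₁ := hR₁ ▸ hpL.mul_right _
      have a2 : p ∣ N₂ := hR₂ ▸ hpL.mul_right _
      by_cases b1 : p ∣ μ₁
      · exact c2 a2 fun b3 => hLμ p hp hpL b1 b3
      · exact c1 a1 b1
    · rcases hp.dvd_or_dvd hpN with a | a
      · refine c1 a fun b => ?_
        rw [hR₁] at a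
        exact cop_dvd p _ _ hp hcop₁ ((hp.dvd_or_dvd a).resolve_left hpL) b
      · refine c2 a fun b => ?_
        rw [hR₂] at a
        exact cop_dvd p _ _ hp hcop₃ ((hp.dvd_or_dvd a).resolve_left hpL) b
  have oddN : ∀ x N : ℤ, Even N → IsCoprime x N → Odd x := by
    intro x N hN hx
    rw [← Int.not_even_iff_odd]
    intro hxe
    exact cop_dvd 2 x N Int.prime_two hx hxe.two_dvd hN.two_dvd
  have four : (4 : ℤ) ∣ k →
      ∀ x y : ℤ, IsCoprime x N₁ → IsCoprime y N₂ → Gs h k N₁ N₂ μ₁ μ₃ x y = 0 := by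
    intro h4 x y hx hy
    have hxo := oddN x N₁ hN₁e hx
    have hyo := oddN y N₂ hN₂e hy
    have hho : Odd h := oddN h k (even_iff_two_dvd.2 ((by norm_num : (2:ℤ) ∣ 4).trans h4)) hhk
    have h4N : (4 : ℤ) ∣ N₁ * N₂ := by
      have := mul_dvd_mul hN₁e.two_dvd hN₂e.two_dvd
      simpa using this
    have four_odd : ∀ z : ℤ, Odd z → ∀ w : ℤ, w = 2 * z → ¬ (4 : ℤ) ∣ h * w := by
      rintro z hz w rfl hd
      have := hho.mul hz
      obtain ⟨a, ha⟩ := hd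
      obtain ⟨b, hb⟩ := this
      have : h * (2 * z) = 2 * (2 * b + 1) := by rw [← hb]; ring
      omega
    have c1 : (4:ℤ) ∣ N₁ → Odd μ₁ → Gs h k N₁ N₂ μ₁ μ₃ x y = 0 := by
      intro h1 h2
      apply Gs_zero h k hk _ _ _ _ _ _ hN₁ 4 h4 (h1.mul_left _) h4N
      obtain ⟨a, ha⟩ := h1
      apply four_odd (μ₁ * x + 2 * (a * y))
      · exact (h2.mul hxo).add_even (even_two_mul _)
      · rw [ha]; ring
    have c2 : (4:ℤ) ∣ N₂ → Odd μ₃ → Gs h k N₁ N₂ μ₁ μ₃ x y = 0 := by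
      intro h1 h2
      rw [Gs_symm]
      apply Gs_zero h k hk _ _ _ _ _ _ hN₂ 4 h4 (h1.mul_left _) (by rwa [mul_comm])
      obtain ⟨a, ha⟩ := h1
      apply four_odd (μ₃ * y + 2 * (a * x))
      · exact (h2.mul hyo).add_even (even_two_mul _)
      · rw [ha]; ring
    have ev_cop : ∀ R μ : ℤ, IsCoprime R μ → Even R → Odd μ := fun R μ hc hR => oddN μ R hR hc.symm
    have dvd4 : ∀ R : ℤ, Even R → (4:ℤ) ∣ L * R := by
      intro R hR
      have := mul_dvd_mul hLe.two_dvd hR.two_dvd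
      simpa using this
    by_cases hL4 : (4:ℤ) ∣ L
    · by_cases hm : Odd μ₁
      · exact c1 (hR₁ ▸ hL4.mul_right _) hm
      · refine c2 (hR₂ ▸ hL4.mul_right _) ?_
        rw [Int.not_odd_iff_even] at hm
        rw [← Int.not_even_iff_odd]
        intro hm3
        exact hLμ 2 Int.prime_two hLe.two_dvd hm.two_dvd hm3.two_dvd
    · rcases h4L hL4 with hR | hR | ⟨hm, hR⟩
      · exact c1 (hR₁ ▸ dvd4 _ hR) (ev_cop _ _ hcop₁ hR)
      · exact c2 (hR₂ ▸ dvd4 _ hR) (ev_cop _ _ hcop₃ hR)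
      · rw [Gs_symm]
        obtain ⟨n, hn⟩ := hLe
        have hno : Odd n := by
          rw [← Int.not_even_iff_odd]
          rintro ⟨j, hj⟩
          exact hL4 ⟨j, by rw [hn, hj]; ring⟩
        obtain ⟨m, hm⟩ := hm
        apply Gs_zero h k hk _ _ _ _ _ _ hN₂ 4 h4
        · exact ⟨m * n * R₂, by rw [hR₂, hn, hm]; ring⟩
        · rwa [mul_comm]
        · apply four_odd (2 * (m * y) + n * R₂ * x)
          · exact (even_two_mul _).add_odd ((hno.mul (Int.not_even_iff_odd.1 hR)).mul hxo)
          · rw [hR₂, hn, hm]; ring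
  by_cases hv : ∃ p : ℤ, Prime p ∧ ¬ p ∣ 2 ∧ p ∣ k ∧ p ∣ N₁ * N₂
  · obtain ⟨p, hp, hp2, hpk, hpN⟩ := hv
    exact Or.inl (oddp p hp hp2 hpk hpN)
  by_cases h4 : (4 : ℤ) ∣ k
  · exact Or.inl (four h4)
  right
  have hke : ∃ k' e : ℤ, (k : ℤ) = k' * e ∧ e ∣ 2 ∧ Odd k' := by
    rcases Int.even_or_odd (k : ℤ) with hke | hko
    · obtain ⟨a, ha⟩ := hke
      refine ⟨a, 2, by rw [ha]; ring, dvd_rfl, ?_⟩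
      rw [← Int.not_even_iff_odd]
      rintro ⟨b, hb⟩
      exact h4 ⟨b, by rw [ha, hb]; ring⟩
    · exact ⟨k, 1, by ring, one_dvd _, hko⟩
  obtain ⟨k', e, hke, he, hk'⟩ := hke
  have hcop : IsCoprime k' (2 * (N₁ * N₂)) := by
    apply isCoprime_of_prime_dvd
    · rintro ⟨h1, h2⟩
      rw [h1] at hk'
      exact absurd hk' (by decide)
    · intro p hp hpk hpN
      have hp2 : ¬ p ∣ 2 := by
        intro hp2
        have : p ∣ 1 := by
          obtain ⟨b, hb⟩ := hk'
          have h3 : p ∣ 2 * b + 1 := hb ▸ hpk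
          exact (dvd_add_right (hp2.mul_right b)).1 h3
        exact hp.not_isUnit (isUnit_of_dvd_one this)
      exact hv ⟨p, hp, hp2, hke ▸ hpk.mul_right _, (hp.dvd_or_dvd hpN).resolve_left hp2⟩
  have cp1 : IsCoprime k' (2 * N₁) := hcop.of_isCoprime_of_dvd_right ⟨N₂, by ring⟩
  have cp2 : IsCoprime k' (2 * N₂) := hcop.of_isCoprime_of_dvd_right ⟨N₁, by ring⟩
  intro x y x' y' hx hy hx' hy' h1 h2
  rw [Gs_eq h k hk N₁ N₂ μ₁ μ₃ x x' y' hN₁ hN₁e k' e hke he cp1 hx hx' h1, Gs_symm,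
    Gs_eq h k hk N₂ N₁ μ₃ μ₁ y y' x hN₂ hN₂e k' e hke he cp2 hy hy' h2, Gs_symm]

lemma split_sum (k : ℕ) [NeZero k] (F : ℕ × ℕ → ℂ) (hF : Summable F) :
    HasSum (fun m : ℕ × ℕ => ∑ l : Fin k × Fin k, F (k * m.1 + l.1, k * m.2 + l.2)) (∑' n, F n) := by
  let e : (ℕ × ℕ) × (Fin k × Fin k) ≃ ℕ × ℕ :=
    (Equiv.prodProdProdComm ℕ ℕ (Fin k) (Fin k)).trans
      (Equiv.prodCongr (Nat.divModEquiv k).symm (Nat.divModEquiv k).symm)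
  have he : ∀ m l, e (m, l) = (k * m.1 + l.1, k * m.2 + l.2) := by
    rintro ⟨m1, m2⟩ ⟨l1, l2⟩
    simp [e, Equiv.prodProdProdComm, Nat.divModEquiv]
    constructor <;> ring
  have h1 : HasSum (F ∘ e) (∑' n, F n) := (Equiv.hasSum_iff e).2 hF.hasSum
  refine h1.prod_fiberwise fun m => ?_
  have := hasSum_fintype fun l : Fin k × Fin k => (F ∘ e) (m, l)
  simpa only [Function.comp, he] using this

lemma periodic_limit {J : Type*} [Fintype J] (k : ℕ) (hk : 0 < k) (ε : J → ℂ) (φ : J → ℤ → ℤ → ℂ)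
    (hφ : ∀ j (l₁ l₂ m₁ m₂ : ℤ), φ j (k * m₁ + l₁) (k * m₂ + l₂) = φ j l₁ l₂)
    (hφn : ∀ j a b, ‖φ j a b‖ = 1)
    (α β : J → ℝ) (A B C : ℝ) (hA : 0 < A) (hD : 0 < 4 * A * C - B ^ 2)
    (h0 : ∑ j, ε j * ∑ l₁ ∈ Finset.range k, ∑ l₂ ∈ Finset.range k, φ j l₁ l₂ = 0)
    (h1 : ∑ j, ε j * ∑ l₁ ∈ Finset.range k, ∑ l₂ ∈ Finset.range k,
      φ j l₁ l₂ * ((l₁ + α j : ℝ) : ℂ) = 0)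
    (h2 : ∑ j, ε j * ∑ l₁ ∈ Finset.range k, ∑ l₂ ∈ Finset.range k,
      φ j l₁ l₂ * ((l₂ + β j : ℝ) : ℂ) = 0) :
    ∃ c : ℂ, Tendsto (fun t : ℝ => ∑ j, ε j * ∑' n : ℕ × ℕ, φ j n.1 n.2 *
      ((Real.exp (-t * (A * (n.1 + α j) ^ 2 + B * (n.1 + α j) * (n.2 + β j)
        + C * (n.2 + β j) ^ 2)) : ℝ) : ℂ)) (𝓝[>] 0) (𝓝 c) := by
  have : NeZero k := ⟨hk.ne'⟩
  have conv : ∀ f : J → ℕ → ℕ → ℂ, ∑ i : J × Fin k × Fin k, ε i.1 * f i.1 i.2.1 i.2.2 =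
      ∑ j, ε j * ∑ l₁ ∈ Finset.range k, ∑ l₂ ∈ Finset.range k, f j l₁ l₂ := by
    intro f
    rw [Fintype.sum_prod_type]
    refine Finset.sum_congr rfl fun j _ => ?_
    dsimp only
    rw [← Finset.mul_sum, Fintype.sum_prod_type, Finset.sum_range]
    congr 1
    refine Finset.sum_congr rfl fun l _ => ?_
    rw [Finset.sum_range]
  obtain ⟨c, hc⟩ := analytic_limit (ι := J × Fin k × Fin k)
    (fun i => ε i.1 * φ i.1 i.2.1 i.2.2) (fun i => (i.2.1 : ℕ) + α i.1)
    (fun i => (i.2.2 : ℕ) + β i.1) A B C hA hD k (by exact_mod_cast hk)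
    (by rw [← h0, ← conv fun j a b => φ j a b])
    (by
      rw [← h1, ← conv fun j a b => φ j a b * ((a + α j : ℝ) : ℂ)]
      exact Finset.sum_congr rfl fun i _ => by rw [mul_assoc])
    (by
      rw [← h2, ← conv fun j a b => φ j a b * ((b + β j : ℝ) : ℂ)]
      exact Finset.sum_congr rfl fun i _ => by rw [mul_assoc])
  refine ⟨c, hc.congr' ?_⟩
  filter_upwards [self_mem_nhdsWithin] with t ht
  have ht : 0 < t := ht
  have hs : ∀ j, HasSum (fun m : ℕ × ℕ => ε j * ∑ l : Fin k × Fin k,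
      φ j l.1 l.2 * ((Real.exp (-t * (A * ((k * m.1 + l.1 : ℕ) + α j) ^ 2 + B * ((k * m.1 + l.1 : ℕ) + α j) * ((k * m.2 + l.2 : ℕ) + β j)
        + C * ((k * m.2 + l.2 : ℕ) + β j) ^ 2)) : ℝ) : ℂ)) (ε j * ∑' n : ℕ × ℕ, φ j n.1 n.2 *
      ((Real.exp (-t * (A * (n.1 + α j) ^ 2 + B * (n.1 + α j) * (n.2 + β j)
        + C * (n.2 + β j) ^ 2)) : ℝ) : ℂ)) := by
    intro j
    apply HasSum.mul_left
    have hsum : Summable fun n : ℕ × ℕ => φ j n.1 n.2 *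
      ((Real.exp (-t * (A * (n.1 + α j) ^ 2 + B * (n.1 + α j) * (n.2 + β j)
        + C * (n.2 + β j) ^ 2)) : ℝ) : ℂ) := by
      apply Summable.of_norm
      refine (summ_2d A B C hA hD t (α j) (β j) ht).congr fun n => ?_
      rw [norm_mul, hφn, one_mul, Complex.norm_real, Real.norm_eq_abs, Real.abs_exp]
    have h := split_sum k _ hsum
    have hper : ∀ a b c d : ℕ, φ j ((k * a + b : ℕ) : ℤ) ((k * c + d : ℕ) : ℤ) = φ j b d := by
      intro a b c d
      push_cast
      exact hφ j b d a c
    simp only [hper] at h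
    exact h
  have hs2 := hasSum_sum (s := Finset.univ) fun j _ => hs j
  rw [← hs2.tsum_eq]
  congr 1
  ext m
  rw [Fintype.sum_prod_type]
  refine Finset.sum_congr rfl fun j _ => ?_
  rw [Finset.mul_sum]
  refine Finset.sum_congr rfl fun l _ => ?_
  rw [mul_assoc]
  congr 5
  push_cast
  ring

lemma refl_sum (h : ℤ) (k : ℕ) (hk : 0 < k) (N₁ N₂ μ₁ μ₃ x y : ℤ) (hN₁ : N₁ ≠ 0) (hN₂ : N₂ ≠ 0)
    (u v : ℤ → ℤ → ℂ) (g : ℂ)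
    (huv : ∀ a b : ℤ, u (k - 1 - a) (k - 1 - b) + v a b = g) :
    (∑ l₁ ∈ Finset.range k, ∑ l₂ ∈ Finset.range k,
      Ph h k N₁ N₂ μ₁ μ₃ (N₁ * l₁ + (N₁ - x)) (N₂ * l₂ + (N₂ - y)) * u l₁ l₂) +
    (∑ l₁ ∈ Finset.range k, ∑ l₂ ∈ Finset.range k,
      Ph h k N₁ N₂ μ₁ μ₃ (N₁ * l₁ + x) (N₂ * l₂ + y) * v l₁ l₂) = g * Gs h k N₁ N₂ μ₁ μ₃ x y := by
  rw [← Finset.sum_range_reflect, Gs, ← Finset.sum_add_distrib, Finset.mul_sum]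
  refine Finset.sum_congr rfl fun a ha => ?_
  rw [← Finset.sum_range_reflect, ← Finset.sum_add_distrib, Finset.mul_sum]
  refine Finset.sum_congr rfl fun b hb => ?_
  rw [Finset.mem_range] at ha hb
  have ea : ((k - 1 - a : ℕ) : ℤ) = k - 1 - a := by omega
  have eb : ((k - 1 - b : ℕ) : ℤ) = k - 1 - b := by omega
  rw [ea, eb]
  have e1 : Ph h k N₁ N₂ μ₁ μ₃ (N₁ * (k - 1 - a) + (N₁ - x)) (N₂ * (k - 1 - b) + (N₂ - y)) =
      Ph h k N₁ N₂ μ₁ μ₃ (N₁ * a + x) (N₂ * b + y) := by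
    rw [← Ph_neg h k N₁ N₂ μ₁ μ₃ (N₁ * a + x), ← Ph_per h k hk _ _ _ _ (-(N₁ * a + x)) _ 1 hN₁,
      ← Ph_per2 h k hk _ _ _ _ _ (-(N₂ * b + y)) 1 hN₂]
    congr 1 <;> ring
  rw [e1, ← mul_add, huv, mul_comm]

theorem radial_limit_exists
    (N₁ N₂ L R₁ R₂ μ₁ μ₃ : ℕ) (σ₂ : ℚ)
    (hN₁ : 0 < N₁) (hN₂ : 0 < N₂) (hN₁e : Even N₁) (hN₂e : Even N₂)
    (hL : L = Nat.gcd N₁ N₂) (hR₁ : N₁ = L * R₁) (hR₂ : N₂ = L * R₂)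
    (hμ₁ : 0 < μ₁) (hμ₃ : 0 < μ₃)
    (hcop₁ : Nat.gcd R₁ μ₁ = 1) (hcop₃ : Nat.gcd R₂ μ₃ = 1)
    (hσ₂ : 2 * σ₂ = (L : ℚ) * R₁ * R₂)
    (hodd : ∀ p q : ℕ, p.Prime → q.Prime → Odd p → Odd q →
      p ∣ Nat.gcd μ₁ μ₃ → q ∣ Nat.gcd μ₁ μ₃ → p = q)
    (hLμ : Nat.gcd L (Nat.gcd μ₁ μ₃) = 1)
    (h4L : ¬ (4 ∣ L) →
      (Even R₁ ∧ ¬ Even R₂ ∧ ¬ Even μ₃) ∨ (¬ Even R₁ ∧ Even R₂ ∧ ¬ Even μ₃) ∨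
        (¬ Even R₁ ∧ ¬ Even R₂ ∧ Even μ₃))
    (r₁ s₁ r₂ s₂ : ℕ) (hr₁ : 0 < r₁) (hs₁ : 0 < s₁) (hr₂ : 0 < r₂) (hs₂ : 0 < s₂)
    (hr₁c : Nat.gcd r₁ N₁ = 1) (hs₁c : Nat.gcd s₁ N₁ = 1)
    (hr₂c : Nat.gcd r₂ N₂ = 1) (hs₂c : Nat.gcd s₂ N₂ = 1)
    (hrs₁ : (r₁ : ℤ) ^ 2 ≡ (s₁ : ℤ) ^ 2 [ZMOD (2 * N₁)])
    (hrs₂ : (r₂ : ℤ) ^ 2 ≡ (s₂ : ℤ) ^ 2 [ZMOD (2 * N₂)])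
    -- the quadratic form `Q(x,y) = σ₁x² + 2σ₂xy + σ₃y²` with `σ₁ = R₁μ₁`, `σ₃ = R₂μ₃`
    (Q : ℚ → ℚ → ℚ)
    (hQ : ∀ x y : ℚ, Q x y = (R₁ * μ₁ : ℕ) * x ^ 2 + 2 * σ₂ * x * y + (R₂ * μ₃ : ℕ) * y ^ 2)
    -- `Q` is positive definite
    (hσ₁pos : 0 < (R₁ * μ₁ : ℚ)) (hdisc : 0 < (R₁ * μ₁ : ℚ) * (R₂ * μ₃ : ℚ) - σ₂ ^ 2)
    (h : ℤ) (k : ℕ) (hk : 0 < k) (hhk : Int.gcd h (k : ℤ) = 1)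
    -- `W t α₁ α₂ n` is the general term `e^{2πi(h/k)·L·Q(n+α)} · e^{−t·L·Q(n+α)}`
    (W : ℝ → ℚ → ℚ → ℕ × ℕ → ℂ)
    (hW : ∀ (t : ℝ) (α₁ α₂ : ℚ) (n : ℕ × ℕ),
      W t α₁ α₂ n = eQ ((h : ℚ) / (k : ℚ) * L * Q ((n.1 : ℚ) + α₁) ((n.2 : ℚ) + α₂)) *
        Real.exp (-t * ((L : ℝ) * (Q ((n.1 : ℚ) + α₁) ((n.2 : ℚ) + α₂) : ℝ)))) :
    (∀ t : ℝ, 0 < t → ∀ i j : Fin 2,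
      Summable (fun n : ℕ × ℕ => ‖W t (pt r₁ N₁ i) (pt r₂ N₂ j) n‖) ∧
      Summable (fun n : ℕ × ℕ => ‖W t (pt s₁ N₁ i) (pt s₂ N₂ j) n‖) ∧
      Summable (fun n : ℕ × ℕ => ‖W t (pt r₁ N₁ i) (pt s₂ N₂ j) n‖) ∧
      Summable (fun n : ℕ × ℕ => ‖W t (pt s₁ N₁ i) (pt r₂ N₂ j) n‖)) ∧
    ∃ c : ℂ, Tendsto (fun t : ℝ =>
        (∑ i : Fin 2, ∑ j : Fin 2,
          ((∑' n : ℕ × ℕ, W t (pt r₁ N₁ i) (pt r₂ N₂ j) n) +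
            ∑' n : ℕ × ℕ, W t (pt s₁ N₁ i) (pt s₂ N₂ j) n)) -
        (∑ i : Fin 2, ∑ j : Fin 2,
          ((∑' n : ℕ × ℕ, W t (pt r₁ N₁ i) (pt s₂ N₂ j) n) +
            ∑' n : ℕ × ℕ, W t (pt s₁ N₁ i) (pt r₂ N₂ j) n)))
      (𝓝[>] (0 : ℝ)) (𝓝 c) := by
  have hLpos : 0 < L := by
    rw [hL]; exact Nat.gcd_pos_of_pos_left _ hN₁
  have hR₁pos : 0 < R₁ := Nat.pos_of_ne_zero (by rintro rfl; omega)
  have hR₂pos : 0 < R₂ := Nat.pos_of_ne_zero (by rintro rfl; omega)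
  have hN₁z : (N₁ : ℤ) ≠ 0 := by exact_mod_cast hN₁.ne'
  have hN₂z : (N₂ : ℤ) ≠ 0 := by exact_mod_cast hN₂.ne'
  let A : ℝ := L * R₁ * μ₁
  let B : ℝ := L * (L * R₁ * R₂)
  let C : ℝ := L * R₂ * μ₃
  have hA : 0 < A := by positivity
  have hD : 0 < 4 * A * C - B ^ 2 := by
    have h1 : (0 : ℚ) < 4 * (R₁ * μ₁) * (R₂ * μ₃) - (L * R₁ * R₂) ^ 2 := by
      rw [← hσ₂]; linarith
    have h2 : (0 : ℝ) < 4 * (R₁ * μ₁) * (R₂ * μ₃) - (L * R₁ * R₂) ^ 2 := by exact_mod_cast h1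
    have h3 : 4 * A * C - B ^ 2 = (L : ℝ) ^ 2 * (4 * (R₁ * μ₁) * (R₂ * μ₃) - (L * R₁ * R₂) ^ 2) := by
      simp only [A, B, C]; ring
    rw [h3]; positivity
  have hWZ : ∀ (t : ℝ) (x y : ℤ) (n : ℕ × ℕ), W t ((x : ℚ) / N₁) ((y : ℚ) / N₂) n =
      Ph h k N₁ N₂ μ₁ μ₃ (N₁ * (n.1 : ℤ) + x) (N₂ * (n.2 : ℤ) + y) *
      ((Real.exp (-t * (A * (n.1 + (x : ℝ) / N₁) ^ 2 + B * (n.1 + (x : ℝ) / N₁) * (n.2 + (y : ℝ) / N₂)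
        + C * (n.2 + (y : ℝ) / N₂) ^ 2)) : ℝ) : ℂ) := by
    intro t x y n
    rw [hW]
    congr 1
    · unfold Ph
      congr 1
      rw [hQ, hσ₂]
      have : (L : ℚ) ≠ 0 := by exact_mod_cast hLpos.ne'
      have : (R₁ : ℚ) ≠ 0 := by exact_mod_cast hR₁pos.ne'
      have : (R₂ : ℚ) ≠ 0 := by exact_mod_cast hR₂pos.ne'
      have : (k : ℚ) ≠ 0 := by exact_mod_cast hk.ne'
      rw [hR₁, hR₂]
      push_cast
      field_simp
    · congr 3
      rw [hQ, hσ₂]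
      simp only [A, B, C]
      push_cast
      ring
  have hpt : ∀ (x N : ℕ) (i : Fin 2), 0 < N → pt x N i = (((![(x : ℤ), (N : ℤ) - x] i : ℤ)) : ℚ) / N := by
    intro x N i hN
    have : (N : ℚ) ≠ 0 := by exact_mod_cast hN.ne'
    fin_cases i
    · simp [pt]
    · simp [pt]; field_simp
  have hsummable : ∀ t : ℝ, 0 < t → ∀ x y : ℤ,
      Summable (fun n : ℕ × ℕ => ‖W t ((x : ℚ) / N₁) ((y : ℚ) / N₂) n‖) := by
    intro t ht x y
    refine (summ_2d A B C hA hD t ((x : ℝ) / N₁) ((y : ℝ) / N₂) ht).congr fun n => ?_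
    rw [hWZ, norm_mul, Ph, eQ_norm, one_mul, Complex.norm_real, Real.norm_eq_abs, Real.abs_exp]
  refine ⟨fun t ht i j => ?_, ?_⟩
  · rw [hpt _ _ _ hN₁, hpt _ _ _ hN₁, hpt _ _ _ hN₂, hpt _ _ _ hN₂]
    exact ⟨hsummable t ht _ _, hsummable t ht _ _, hsummable t ht _ _, hsummable t ht _ _⟩
  -- arithmetic input
  have hN₁e' : Even (N₁ : ℤ) := by exact_mod_cast hN₁e
  have hN₂e' : Even (N₂ : ℤ) := by exact_mod_cast hN₂e
  have hLe : Even (L : ℤ) := by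
    have : 2 ∣ L := by rw [hL]; exact Nat.dvd_gcd hN₁e.two_dvd hN₂e.two_dvd
    exact_mod_cast even_iff_two_dvd.2 this
  have hdich := dichotomy h k hk (Int.isCoprime_iff_gcd_eq_one.2 hhk) N₁ N₂ L R₁ R₂ μ₁ μ₃
    hN₁z hN₂z hN₁e' hN₂e' hLe (by exact_mod_cast hR₁) (by exact_mod_cast hR₂)
    (Nat.isCoprime_iff_coprime.2 hcop₁) (Nat.isCoprime_iff_coprime.2 hcop₃)
    (by
      intro p hp h1 h2 h3
      have hc : IsCoprime (L : ℤ) ((Nat.gcd μ₁ μ₃ : ℕ) : ℤ) := Nat.isCoprime_iff_coprime.2 hLμ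
      have h4 : p ∣ ((Nat.gcd μ₁ μ₃ : ℕ) : ℤ) := by
        have := Int.dvd_coe_gcd h2 h3
        simpa using this
      exact hp.not_isUnit (hc.isUnit_of_dvd' h1 h4))
    (by
      intro h4
      have h4' : ¬ (4 ∣ L) := fun h' => h4 (by exact_mod_cast h')
      rcases h4L h4' with ⟨a, _, _⟩ | ⟨_, a, _⟩ | ⟨_, a, b⟩
      · left; exact_mod_cast a
      · right; left; exact_mod_cast a
      · right; right; exact ⟨by exact_mod_cast b, by exact_mod_cast a⟩)
  let X₁ : Fin 2 → Fin 2 → ℤ := fun c i => ![![(r₁ : ℤ), N₁ - r₁], ![(s₁ : ℤ), N₁ - s₁]] c i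
  let X₂ : Fin 2 → Fin 2 → ℤ := fun c i => ![![(r₂ : ℤ), N₂ - r₂], ![(s₂ : ℤ), N₂ - s₂]] c i
  have hXc : ∀ (r s N : ℕ) , Nat.gcd r N = 1 → Nat.gcd s N = 1 → ∀ c i : Fin 2,
      IsCoprime ((![![(r : ℤ), N - r], ![(s : ℤ), N - s]] : Fin 2 → Fin 2 → ℤ) c i) N := by
    intro r s N hr hs c i
    have h1 : IsCoprime (r : ℤ) N := Nat.isCoprime_iff_coprime.2 hr
    have h2 : IsCoprime (s : ℤ) N := Nat.isCoprime_iff_coprime.2 hs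
    have h3 : ∀ z : ℤ, IsCoprime z N → IsCoprime (N - z) N := by
      intro z hz
      obtain ⟨a, b, hab⟩ := hz
      exact ⟨-a, a + b, by linear_combination hab⟩
    fin_cases c <;> fin_cases i
    · exact h1
    · exact h3 _ h1
    · exact h2
    · exact h3 _ h2
  have hXs : ∀ (r s N : ℕ), Even (N : ℤ) → (r : ℤ) ^ 2 ≡ (s : ℤ) ^ 2 [ZMOD (2 * N)] → ∀ c i : Fin 2,
      2 * (N : ℤ) ∣ ((![![(r : ℤ), N - r], ![(s : ℤ), N - s]] : Fin 2 → Fin 2 → ℤ) c i) ^ 2 - (r : ℤ) ^ 2 := by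
    intro r s N hN hrs c i
    have h1 : 2 * (N : ℤ) ∣ (s : ℤ) ^ 2 - (r : ℤ) ^ 2 := hrs.dvd
    have h3 : ∀ z : ℤ, 2 * (N : ℤ) ∣ (N - z) ^ 2 - z ^ 2 := by
      intro z
      obtain ⟨a, ha⟩ := hN
      exact ⟨a - z, by rw [ha]; ring⟩
    fin_cases c <;> fin_cases i
    · simp
    · exact h3 _
    · exact h1
    · have := dvd_add (h3 s) h1
      simpa using this
  have hodd' : ∀ x N : ℤ, Even N → IsCoprime x N → Odd x := by
    intro x N hN hx
    rw [← Int.not_even_iff_odd]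
    intro hxe
    exact Int.prime_two.not_isUnit (hx.isUnit_of_dvd' hxe.two_dvd hN.two_dvd)
  have hg : ∃ g : ℂ, ∀ c d i j, Gs h k N₁ N₂ μ₁ μ₃ (X₁ c i) (X₂ d j) = g := by
    rcases hdich with hz | he
    · exact ⟨0, fun c d i j => hz _ _ (hXc _ _ _ hr₁c hs₁c c i) (hXc _ _ _ hr₂c hs₂c d j)⟩
    · refine ⟨Gs h k N₁ N₂ μ₁ μ₃ r₁ r₂, fun c d i j => he _ _ _ _ ?_ ?_ ?_ ?_ ?_ ?_⟩
      · exact hodd' _ _ hN₁e' (Nat.isCoprime_iff_coprime.2 hr₁c)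
      · exact hodd' _ _ hN₂e' (Nat.isCoprime_iff_coprime.2 hr₂c)
      · exact hodd' _ _ hN₁e' (hXc _ _ _ hr₁c hs₁c c i)
      · exact hodd' _ _ hN₂e' (hXc _ _ _ hr₂c hs₂c d j)
      · exact hXs _ _ _ hN₁e' hrs₁ c i
      · exact hXs _ _ _ hN₂e' hrs₂ d j
  obtain ⟨g, hg⟩ := hg
  have hX₁0 : ∀ c, X₁ c 1 = N₁ - X₁ c 0 := by intro c; fin_cases c <;> simp [X₁]
  have hX₂0 : ∀ c, X₂ c 1 = N₂ - X₂ c 0 := by intro c; fin_cases c <;> simp [X₂]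
  have hX₁1 : ∀ c, X₁ c 0 = N₁ - X₁ c 1 := by intro c; rw [hX₁0]; ring
  have hX₂1 : ∀ c, X₂ c 0 = N₂ - X₂ c 1 := by intro c; rw [hX₂0]; ring
  let ε : Fin 2 × Fin 2 × Fin 2 × Fin 2 → ℂ := fun z => if z.1 = z.2.1 then 1 else -1
  -- abstract cancellation
  have hcancel : ∀ (M : ℤ → ℤ → ℂ) (g' : ℂ),
      (∀ c d, M (X₁ c 1) (X₂ d 1) + M (X₁ c 0) (X₂ d 0) = g') →
      (∀ c d, M (X₁ c 1) (X₂ d 0) + M (X₁ c 0) (X₂ d 1) = g') →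
      ∑ z, ε z * M (X₁ z.1 z.2.2.1) (X₂ z.2.1 z.2.2.2) = 0 := by
    intro M g' h1 h2
    simp only [Fintype.sum_prod_type, Fin.sum_univ_two, ε]
    simp only [if_true, if_false, zero_ne_one, one_ne_zero]
    linear_combination h1 0 0 + h2 0 0 + h1 1 1 + h2 1 1 - h1 0 1 - h2 0 1 - h1 1 0 - h2 1 0
  have hN₁r : (N₁ : ℝ) ≠ 0 := by exact_mod_cast hN₁.ne'
  have hN₂r : (N₂ : ℝ) ≠ 0 := by exact_mod_cast hN₂.ne'
  let M₁ : ℤ → ℤ → ℂ := fun x y => ∑ l₁ ∈ Finset.range k, ∑ l₂ ∈ Finset.range k,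
      Ph h k N₁ N₂ μ₁ μ₃ (N₁ * (l₁ : ℤ) + x) (N₂ * (l₂ : ℤ) + y) * (((l₁ : ℕ) + (x : ℝ) / N₁ : ℝ) : ℂ)
  let M₂ : ℤ → ℤ → ℂ := fun x y => ∑ l₁ ∈ Finset.range k, ∑ l₂ ∈ Finset.range k,
      Ph h k N₁ N₂ μ₁ μ₃ (N₁ * (l₁ : ℤ) + x) (N₂ * (l₂ : ℤ) + y) * (((l₂ : ℕ) + (y : ℝ) / N₂ : ℝ) : ℂ)
  have hM₁ : ∀ x y, M₁ (N₁ - x) (N₂ - y) + M₁ x y = k * Gs h k N₁ N₂ μ₁ μ₃ x y := by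
    intro x y
    have := refl_sum h k hk N₁ N₂ μ₁ μ₃ x y hN₁z hN₂z
      (fun a _ => (((a : ℤ) + ((N₁ - x : ℤ) : ℝ) / N₁ : ℝ) : ℂ))
      (fun a _ => (((a : ℤ) + (x : ℝ) / N₁ : ℝ) : ℂ)) k (by
        intro a b
        rw [← Complex.ofReal_add, ← Complex.ofReal_natCast]
        congr 1
        push_cast
        field_simp
        ring)
    simpa only [M₁, Int.cast_natCast] using this
  have hM₂ : ∀ x y, M₂ (N₁ - x) (N₂ - y) + M₂ x y = k * Gs h k N₁ N₂ μ₁ μ₃ x y := by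
    intro x y
    have := refl_sum h k hk N₁ N₂ μ₁ μ₃ x y hN₁z hN₂z
      (fun _ a => (((a : ℤ) + ((N₂ - y : ℤ) : ℝ) / N₂ : ℝ) : ℂ))
      (fun _ a => (((a : ℤ) + (y : ℝ) / N₂ : ℝ) : ℂ)) k (by
        intro a b
        rw [← Complex.ofReal_add, ← Complex.ofReal_natCast]
        congr 1
        push_cast
        field_simp
        ring)
    simpa only [M₂, Int.cast_natCast] using this
  obtain ⟨c, hc⟩ := periodic_limit (J := Fin 2 × Fin 2 × Fin 2 × Fin 2) k hk ε
    (fun z a b => Ph h k N₁ N₂ μ₁ μ₃ (N₁ * a + X₁ z.1 z.2.2.1) (N₂ * b + X₂ z.2.1 z.2.2.2))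
    (by
      intro z l₁ l₂ m₁ m₂
      rw [← Ph_per h k hk _ _ _ _ (N₁ * l₁ + X₁ z.1 z.2.2.1) _ m₁ hN₁z,
        ← Ph_per2 h k hk _ _ _ _ _ (N₂ * l₂ + X₂ z.2.1 z.2.2.2) m₂ hN₂z]
      congr 1 <;> ring)
    (by intro z a b; exact eQ_norm _)
    (fun z => (X₁ z.1 z.2.2.1 : ℝ) / N₁) (fun z => (X₂ z.2.1 z.2.2.2 : ℝ) / N₂) A B C hA hD
    (hcancel (fun x y => Gs h k N₁ N₂ μ₁ μ₃ x y) (g + g) (fun c d => by rw [hg, hg])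
      (fun c d => by rw [hg, hg]))
    (hcancel M₁ (k * g)
      (fun c d => by rw [hX₁0, hX₂0, hM₁, hg]) (fun c d => by rw [hX₁0, hX₂1, hM₁, hg]))
    (hcancel M₂ (k * g)
      (fun c d => by rw [hX₁0, hX₂0, hM₂, hg]) (fun c d => by rw [hX₁0, hX₂1, hM₂, hg]))
  refine ⟨c, hc.congr fun t => ?_⟩
  have hZ : ∀ z : Fin 2 × Fin 2 × Fin 2 × Fin 2,
      ε z * ∑' n : ℕ × ℕ, Ph h k N₁ N₂ μ₁ μ₃ (N₁ * (n.1 : ℤ) + X₁ z.1 z.2.2.1)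
        (N₂ * (n.2 : ℤ) + X₂ z.2.1 z.2.2.2) *
      ((Real.exp (-t * (A * (n.1 + (X₁ z.1 z.2.2.1 : ℝ) / N₁) ^ 2 +
        B * (n.1 + (X₁ z.1 z.2.2.1 : ℝ) / N₁) * (n.2 + (X₂ z.2.1 z.2.2.2 : ℝ) / N₂)
        + C * (n.2 + (X₂ z.2.1 z.2.2.2 : ℝ) / N₂) ^ 2)) : ℝ) : ℂ) =
      ε z * ∑' n : ℕ × ℕ, W t ((X₁ z.1 z.2.2.1 : ℚ) / N₁) ((X₂ z.2.1 z.2.2.2 : ℚ) / N₂) n := by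
    intro z
    congr 1
    exact tsum_congr fun n => (hWZ t _ _ n).symm
  rw [Finset.sum_congr rfl fun z _ => hZ z]
  have q1 : ∀ i, pt r₁ N₁ i = (X₁ 0 i : ℚ) / N₁ := fun i => hpt _ _ _ hN₁
  have q2 : ∀ i, pt s₁ N₁ i = (X₁ 1 i : ℚ) / N₁ := fun i => hpt _ _ _ hN₁
  have q3 : ∀ i, pt r₂ N₂ i = (X₂ 0 i : ℚ) / N₂ := fun i => hpt _ _ _ hN₂
  have q4 : ∀ i, pt s₂ N₂ i = (X₂ 1 i : ℚ) / N₂ := fun i => hpt _ _ _ hN₂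
  simp only [q1, q2, q3, q4]
  generalize X₁ = Y₁
  generalize X₂ = Y₂
  simp only [Fintype.sum_prod_type, Fin.sum_univ_two, ε]
  simp only [if_true, if_false, zero_ne_one, one_ne_zero]
  ring
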